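/- Every strict tensor C*-category C with identity object ι defines an upper semicontinuous field of strict tensor C*-categories over the spectrum X of the abelian unital C*-algebra [ι,ι]: there is a family of fiber C*-functors x_* : C → C_x, x ∈ X, such that each norm function x ↦ ‖x_*(t)‖ is upper semicontinuous with supremum ‖t‖, and each fiber C_x inherits a strict tensor structure. -/

import Mathlib

/-!
STATEMENT 11: Every strict tensor C*-category `C` with identity object `ι` defines an
upper semicontinuous field of strict tensor C*-categories over the spectrum `X` of the
abelian unital C*-algebra `[ι,ι]`: there is a family of fiber C*-functors
`x_* : C → C_x`, `x ∈ X`, such that each norm function `x ↦ ‖x_*(t)‖` is upper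
semicontinuous with supremum `‖t‖`, and each fiber `C_x` inherits a strict tensor
structure.

The spectrum `X` is realized as the space of characters of `[ι,ι]` (with the topology
of pointwise convergence), the fiber of `(ρ,σ)` at a character `χ` as the quotient of
`(ρ,σ)` by the closed subspace generated by `{ f × t : χ(f) = 0, f ∈ [ι,ι] }`, and the
fiber functor `x_*` as the quotient map; `‖x_*(t)‖` is the quotient seminorm. That the
fibers are strict tensor C*-categories and the `x_*` (strict tensor) C*-functors is
expressed by compatibility of the quotient seminorms with all the operations of `C`.
-/

universe u v u' v'

/-- A C*-category structure on a family of Banach spaces `Hom ρ σ` indexed by objects: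
bilinear norm-decreasing composition, identities, and an isometric involutive
contravariant `*` satisfying the C*-identity. -/
structure CStarCategoryStruct {Obj : Type u} (Hom : Obj → Obj → Type v)
    [∀ ρ σ, NormedAddCommGroup (Hom ρ σ)] [∀ ρ σ, NormedSpace ℂ (Hom ρ σ)] :
    Type max u v where
  comp : ∀ {ρ σ τ : Obj}, Hom σ τ → Hom ρ σ → Hom ρ τ
  id : ∀ ρ : Obj, Hom ρ ρ
  star : ∀ {ρ σ : Obj}, Hom ρ σ → Hom σ ρ
  comp_assoc : ∀ {ρ σ τ υ : Obj} (t : Hom τ υ) (u : Hom σ τ) (v : Hom ρ σ),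
    comp (comp t u) v = comp t (comp u v)
  id_comp : ∀ {ρ σ : Obj} (t : Hom ρ σ), comp (id σ) t = t
  comp_id : ∀ {ρ σ : Obj} (t : Hom ρ σ), comp t (id ρ) = t
  add_comp : ∀ {ρ σ τ : Obj} (t t' : Hom σ τ) (u : Hom ρ σ),
    comp (t + t') u = comp t u + comp t' u
  comp_add : ∀ {ρ σ τ : Obj} (t : Hom σ τ) (u u' : Hom ρ σ),
    comp t (u + u') = comp t u + comp t u'
  smul_comp : ∀ {ρ σ τ : Obj} (c : ℂ) (t : Hom σ τ) (u : Hom ρ σ),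
    comp (c • t) u = c • comp t u
  comp_smul : ∀ {ρ σ τ : Obj} (c : ℂ) (t : Hom σ τ) (u : Hom ρ σ),
    comp t (c • u) = c • comp t u
  norm_comp_le : ∀ {ρ σ τ : Obj} (t : Hom σ τ) (u : Hom ρ σ), ‖comp t u‖ ≤ ‖t‖ * ‖u‖
  star_star : ∀ {ρ σ : Obj} (t : Hom ρ σ), star (star t) = t
  star_add : ∀ {ρ σ : Obj} (t t' : Hom ρ σ), star (t + t') = star t + star t'
  star_smul : ∀ {ρ σ : Obj} (c : ℂ) (t : Hom ρ σ),
    star (c • t) = (starRingEnd ℂ) c • star t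
  star_comp : ∀ {ρ σ τ : Obj} (t : Hom σ τ) (u : Hom ρ σ),
    star (comp t u) = comp (star u) (star t)
  star_id : ∀ ρ : Obj, star (id ρ) = id ρ
  norm_star : ∀ {ρ σ : Obj} (t : Hom ρ σ), ‖star t‖ = ‖t‖
  cstar_identity : ∀ {ρ σ : Obj} (t : Hom ρ σ), ‖comp (star t) t‖ = ‖t‖ ^ 2

variable {Obj : Type u} [Monoid Obj] {Hom : Obj → Obj → Type v}
  [∀ ρ σ, NormedAddCommGroup (Hom ρ σ)] [∀ ρ σ, NormedSpace ℂ (Hom ρ σ)]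

/-- A strict tensor structure on a C*-category: an associative bilinear C*-bifunctor
`×` with unit the identity object `1` and commuting with `*`. -/
structure StrictTensorStruct (C : CStarCategoryStruct Hom) : Type max u v where
  tens : ∀ {ρ σ ρ' σ' : Obj}, Hom ρ σ → Hom ρ' σ' → Hom (ρ * ρ') (σ * σ')
  tens_id : ∀ ρ ρ' : Obj, tens (C.id ρ) (C.id ρ') = C.id (ρ * ρ')
  tens_comp : ∀ {ρ σ τ ρ' σ' τ' : Obj} (t : Hom σ τ) (u : Hom ρ σ)
    (t' : Hom σ' τ') (u' : Hom ρ' σ'),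
    tens (C.comp t u) (C.comp t' u') = C.comp (tens t t') (tens u u')
  tens_add_left : ∀ {ρ σ ρ' σ' : Obj} (t t' : Hom ρ σ) (u : Hom ρ' σ'),
    tens (t + t') u = tens t u + tens t' u
  tens_add_right : ∀ {ρ σ ρ' σ' : Obj} (t : Hom ρ σ) (u u' : Hom ρ' σ'),
    tens t (u + u') = tens t u + tens t u'
  tens_smul_left : ∀ {ρ σ ρ' σ' : Obj} (c : ℂ) (t : Hom ρ σ) (u : Hom ρ' σ'),
    tens (c • t) u = c • tens t u
  tens_smul_right : ∀ {ρ σ ρ' σ' : Obj} (c : ℂ) (t : Hom ρ σ) (u : Hom ρ' σ'),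
    tens t (c • u) = c • tens t u
  tens_star : ∀ {ρ σ ρ' σ' : Obj} (t : Hom ρ σ) (u : Hom ρ' σ'),
    C.star (tens t u) = tens (C.star t) (C.star u)
  tens_assoc : ∀ {ρ σ ρ' σ' ρ'' σ'' : Obj} (t : Hom ρ σ) (u : Hom ρ' σ')
    (v : Hom ρ'' σ''), HEq (tens (tens t u) v) (tens t (tens u v))
  one_tens : ∀ {ρ σ : Obj} (t : Hom ρ σ), HEq (tens (C.id 1) t) t
  tens_one : ∀ {ρ σ : Obj} (t : Hom ρ σ), HEq (tens t (C.id 1)) t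
  norm_tens_le : ∀ {ρ σ ρ' σ' : Obj} (t : Hom ρ σ) (u : Hom ρ' σ'),
    ‖tens t u‖ ≤ ‖t‖ * ‖u‖

/-- The left action `f^l_{ρ,σ}(t) = f × t` of `(ι,ι)` on `(ρ,σ)`. -/
def StrictTensorStruct.lact {C : CStarCategoryStruct Hom} (T : StrictTensorStruct C)
    {ρ σ : Obj} (f : Hom 1 1) (t : Hom ρ σ) : Hom ρ σ :=
  cast (by rw [one_mul, one_mul]) (T.tens f t)

/-- The right action `f^r_{ρ,σ}(t) = t × f` of `(ι,ι)` on `(ρ,σ)`. -/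
def StrictTensorStruct.ract {C : CStarCategoryStruct Hom} (T : StrictTensorStruct C)
    {ρ σ : Obj} (f : Hom 1 1) (t : Hom ρ σ) : Hom ρ σ :=
  cast (by rw [mul_one, mul_one]) (T.tens t f)

/-- `[ι,ι] := { f ∈ (ι,ι) : 1_ρ × f = f × 1_ρ for every object ρ }`. -/
def StrictTensorStruct.centralScalars {C : CStarCategoryStruct Hom}
    (T : StrictTensorStruct C) : Set (Hom 1 1) :=
  {f : Hom 1 1 | ∀ ρ : Obj, HEq (T.tens (C.id ρ) f) (T.tens f (C.id ρ))}


/-- A character of the abelian unital C*-algebra `[ι,ι]`: a point of its spectrum. -/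
def IsCharacter (C : CStarCategoryStruct Hom) (T : StrictTensorStruct C)
    (χ : Hom 1 1 → ℂ) : Prop :=
  Continuous χ ∧ (∀ f g : Hom 1 1, χ (f + g) = χ f + χ g) ∧
    (∀ (c : ℂ) (f : Hom 1 1), χ (c • f) = c * χ f) ∧
    (∀ f ∈ T.centralScalars, ∀ g ∈ T.centralScalars, χ (C.comp f g) = χ f * χ g) ∧
    χ (C.id 1) = 1 ∧
    (∀ f ∈ T.centralScalars, χ (C.star f) = (starRingEnd ℂ) (χ f))

/-- The kernel of the fiber functor at a character `χ` of `[ι,ι]` on the arrow space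
`(ρ,σ)`: the closed subspace generated by `{ f × t : f ∈ [ι,ι], χ(f) = 0 }`. -/
def tensFiberNull {C : CStarCategoryStruct Hom} (T : StrictTensorStruct C)
    (χ : Hom 1 1 → ℂ) (ρ σ : Obj) : Submodule ℂ (Hom ρ σ) :=
  (Submodule.span ℂ
    {s : Hom ρ σ | ∃ f ∈ T.centralScalars, ∃ t : Hom ρ σ,
      χ f = 0 ∧ s = T.lact f t}).topologicalClosure

/-- The fiber seminorm `‖x_*(t)‖` at a character `χ`: the quotient seminorm of
`(ρ,σ)/tensFiberNull`. -/
noncomputable def tensFiberSeminorm {C : CStarCategoryStruct Hom}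
    (T : StrictTensorStruct C) (χ : Hom 1 1 → ℂ) {ρ σ : Obj} (t : Hom ρ σ) : ℝ :=
  sInf {r : ℝ | ∃ s ∈ tensFiberNull T χ ρ σ, r = ‖t - s‖}

/-!
For a module over the commutative algebra `[ι,ι]`, call a self-adjoint contraction `e` with
`χ(e) = 1` a peak element at the character `χ`. The elements `(1 - c f*f)ⁿ` show that some peak
element almost annihilates any given `f` in the kernel of `χ`. As peak elements are closed under
products, the quotient seminorm at `χ` is `‖t‖_χ = inf ‖e • t‖` over the peak elements `e`. If
`‖e • t‖ < r`, then `|χ'(e)| ‖t‖_χ' ≤ ‖e • t‖ < |χ'(e)| r` for `χ'` near `χ`, which gives upper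
semicontinuity. Replacing arrows by `e • t` reduces the norm properties of the fibers to those of
`C`.

The supremum is attained: in the commutative algebra generated by `[ι,ι] × 1_ρ` and `a = t*t`, a
character of the completion that takes the value of modulus `‖a‖` at `a` restricts to some `χ` on
`[ι,ι]`, and then `‖a‖ = |χ(e)| ‖a‖ ≤ ‖e • a‖` for every peak element `e` at `χ`.
-/

open UniformSpace

/-! ### Characters of commutative pre-C*-algebras -/

section Completion

variable {A : Type*} [NormedRing A] [StarRing A] [CStarRing A]

noncomputable instance : Star (Completion A) := ⟨Completion.map star⟩

theorem completion_coe_star (a : A) : ((star a : A) : Completion A) = star (a : Completion A) :=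
  (Completion.map_coe star_isometry.uniformContinuous a).symm

instance : ContinuousStar (Completion A) := ⟨Completion.continuous_map⟩

noncomputable instance : StarRing (Completion A) where
  star_involutive a := by
    induction a using Completion.induction_on with
    | hp => exact isClosed_eq (by fun_prop) (by fun_prop)
    | ih a => simp only [← completion_coe_star, star_star]
  star_mul a b := by
    induction a, b using Completion.induction_on₂ with
    | hp => exact isClosed_eq (by fun_prop) (by fun_prop)
    | ih a b => simp only [← completion_coe_star, ← Completion.coe_mul, star_mul]
  star_add a b := by
    induction a, b using Completion.induction_on₂ with
    | hp => exact isClosed_eq (by fun_prop) (by fun_prop)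
    | ih a b => simp only [← completion_coe_star, ← Completion.coe_add, star_add]

instance : CStarRing (Completion A) where
  norm_mul_self_le a := by
    induction a using Completion.induction_on with
    | hp => exact isClosed_le (by fun_prop) (by fun_prop)
    | ih a =>
      simp only [← completion_coe_star, ← Completion.coe_mul, Completion.norm_coe]
      exact CStarRing.norm_mul_self_le a

variable [NormedAlgebra ℂ A]

instance [StarModule ℂ A] : StarModule ℂ (Completion A) where
  star_smul c a := by
    induction a using Completion.induction_on with
    | hp => exact isClosed_eq (continuous_const_smul c).star (continuous_star.const_smul (star c))
    | ih a => rw [← Completion.coe_smul, ← completion_coe_star, star_smul, Completion.coe_smul,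
        completion_coe_star]

variable (A) in
/-- The canonical embedding of a pre-C*-algebra into its completion. -/
noncomputable def toCompletion : A →⋆ₐ[ℂ] Completion A where
  toFun := (↑)
  map_one' := Completion.coe_one A
  map_mul' := Completion.coe_mul
  map_zero' := Completion.coe_zero
  map_add' := Completion.coe_add
  commutes' c := by
    rw [Algebra.algebraMap_eq_smul_one, Completion.coe_smul, Completion.coe_one,
      Algebra.algebraMap_eq_smul_one]
  map_star' := completion_coe_star

theorem norm_toCompletion (a : A) : ‖toCompletion A a‖ = ‖a‖ :=
  Completion.norm_coe a

end Completion

section Gelfand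

variable {A : Type*} [NormedCommRing A] [StarRing A] [CStarRing A] [NormedAlgebra ℂ A]
  [StarModule ℂ A]

noncomputable instance : CommCStarAlgebra (Completion A) where

theorem exists_characterSpace_norm_apply_eq {B : Type*} [CommCStarAlgebra B] [Nontrivial B]
    (b : B) : ∃ ψ : WeakDual.characterSpace ℂ B, ‖ψ b‖ = ‖b‖ := by
  obtain ⟨z, hz, hzb⟩ := spectrum.exists_nnnorm_eq_spectralRadius b
  obtain ⟨ψ, rfl⟩ := WeakDual.CharacterSpace.mem_spectrum_iff_exists.1 hz
  rw [IsStarNormal.spectralRadius_eq_nnnorm, ENNReal.coe_inj] at hzb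
  exact ⟨ψ, congrArg NNReal.toReal hzb⟩

theorem exists_starAlgHom_norm_apply_eq [Nontrivial A] (a : A) :
    ∃ φ : A →⋆ₐ[ℂ] ℂ, (∀ f, ‖φ f‖ ≤ ‖f‖) ∧ ‖φ a‖ = ‖a‖ := by
  have : Nontrivial (Completion A) := (Completion.coe_injective A).nontrivial
  obtain ⟨ψ, hψ⟩ := exists_characterSpace_norm_apply_eq (toCompletion A a)
  refine ⟨(StarAlgHomClass.toStarAlgHom ψ).comp (toCompletion A), fun f => ?_, ?_⟩
  · exact (AlgHom.norm_apply_le_self ψ _).trans_eq (norm_toCompletion f)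
  · exact hψ.trans (norm_toCompletion a)

theorem norm_le_of_forall_starAlgHom {a : A} {r : ℝ} (hr : 0 ≤ r)
    (h : ∀ φ : A →⋆ₐ[ℂ] ℂ, (∀ f, ‖φ f‖ ≤ ‖f‖) → ‖φ a‖ ≤ r) : ‖a‖ ≤ r := by
  cases subsingleton_or_nontrivial A
  · rwa [Subsingleton.elim a 0, norm_zero]
  · obtain ⟨φ, hφ, ha⟩ := exists_starAlgHom_norm_apply_eq a
    exact ha ▸ h φ hφ

end Gelfand

theorem exists_starAlgHom_norm_mul_le {A B : Type*} [CommSemiring A] [StarRing A] [Algebra ℂ A]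
    [NormedRing B] [StarRing B] [CStarRing B] [NormedAlgebra ℂ B] [StarModule ℂ B] [Nontrivial B]
    (i : A →⋆ₐ[ℂ] B) {a : B} (ha : IsSelfAdjoint a) (hia : ∀ f, Commute (i f) a) :
    ∃ φ : A →⋆ₐ[ℂ] ℂ, ∀ f, ‖φ f‖ * ‖a‖ ≤ ‖i f * a‖ := by
  set S : Set B := insert a (Set.range i)
  have commute_S : ∀ x ∈ S, ∀ y ∈ S, x * y = y * x := by
    rintro _ (rfl | ⟨f, rfl⟩) _ (rfl | ⟨g, rfl⟩)
    · rfl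
    · exact (hia g).symm
    · exact hia f
    · rw [← map_mul, ← map_mul, mul_comm]
  have star_S : ∀ x ∈ S, star x ∈ S := by
    rintro _ (rfl | ⟨f, rfl⟩)
    · exact .inl ha.star_eq
    · exact .inr ⟨star f, map_star i f⟩
  have := StarAlgebra.isMulCommutative_adjoin ℂ commute_S
    fun x hx y hy => commute_S x hx _ (star_S y hy)
  set D := StarAlgebra.adjoin ℂ S
  let _ : NormedCommRing D :=
    { (inferInstance : NormedRing D) with mul_comm := mul_comm' }
  have subset_D : S ⊆ D := StarAlgebra.subset_adjoin ℂ S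
  let j : A →⋆ₐ[ℂ] D := i.codRestrict D fun f => subset_D (.inr ⟨f, rfl⟩)
  let a' : D := ⟨a, subset_D (.inl rfl)⟩
  obtain ⟨φ, hφ, ha'⟩ := exists_starAlgHom_norm_apply_eq a'
  refine ⟨φ.comp j, fun f => ?_⟩
  calc ‖φ (j f)‖ * ‖a‖ = ‖φ (j f * a')‖ := by rw [map_mul, norm_mul, ha']; rfl
    _ ≤ ‖i f * a‖ := hφ (j f * a')

/-! ### Fibers of modules over a commutative pre-C*-algebra -/

theorem mul_mul_one_sub_pow_le_one {x : ℝ} (hx₀ : 0 ≤ x) (hx₁ : x ≤ 1) (n : ℕ) :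
    n * x * (1 - x) ^ n ≤ 1 := by
  have bernoulli : n * x ≤ (1 + x) ^ n := by
    linarith [one_add_mul_le_pow (by linarith : -2 ≤ x) n]
  calc n * x * (1 - x) ^ n ≤ (1 + x) ^ n * (1 - x) ^ n := by
        gcongr
    _ = (1 - x ^ 2) ^ n := by rw [← mul_pow]; ring
    _ ≤ 1 := pow_le_one₀ (by nlinarith) (by nlinarith)

theorem one_sub_pow_mul_le {c ε y : ℝ} {n : ℕ} (hc : 0 ≤ c) (hε : 0 ≤ ε) (hy : 0 ≤ y)
    (hcy : c * y ^ 2 ≤ 1) (hn : 1 ≤ n * (c * ε ^ 2)) : (1 - c * y ^ 2) ^ n * y ≤ ε := by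
  have : 0 ≤ (1 - c * y ^ 2) ^ n := pow_nonneg (sub_nonneg.2 hcy) n
  rcases le_total y ε with hyε | hεy
  · have : (1 - c * y ^ 2) ^ n ≤ 1 :=
      pow_le_one₀ (sub_nonneg.2 hcy) (sub_le_self _ (by positivity))
    exact (mul_le_of_le_one_left hy this).trans hyε
  · calc (1 - c * y ^ 2) ^ n * y ≤ (1 - c * y ^ 2) ^ n * y * (n * (c * ε ^ 2)) :=
          le_mul_of_one_le_right (by positivity) hn
      _ = ε * (n * (c * (y * ε)) * (1 - c * y ^ 2) ^ n) := by ring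
      _ ≤ ε * (n * (c * (y * y)) * (1 - c * y ^ 2) ^ n) := by gcongr
      _ ≤ ε := by
        rw [← pow_two]
        exact mul_le_of_le_one_right hε (mul_mul_one_sub_pow_le_one (by positivity) hcy n)

/-- `e` peaks at the character `φ`: a self-adjoint contraction with `φ e = 1`. Peak elements are
the algebraic substitute for bump functions concentrated near the point `φ`. -/
structure IsPeak {A : Type*} [NormedRing A] [StarRing A] [Algebra ℂ A] (φ : A →ₐ[ℂ] ℂ) (e : A) :
    Prop where
  isSelfAdjoint : IsSelfAdjoint e
  map_eq_one : φ e = 1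
  norm_le_one : ‖e‖ ≤ 1

section Peak

variable {A : Type*} [NormedCommRing A] [StarRing A] [NormedAlgebra ℂ A] {φ : A →ₐ[ℂ] ℂ} {e e' : A}

theorem IsPeak.mul (he : IsPeak φ e) (he' : IsPeak φ e') : IsPeak φ (e * e') where
  isSelfAdjoint := he.isSelfAdjoint.mul he'.isSelfAdjoint
  map_eq_one := by rw [map_mul, he.map_eq_one, he'.map_eq_one, one_mul]
  norm_le_one :=
    (norm_mul_le e e').trans (mul_le_one₀ he.norm_le_one (norm_nonneg _) he'.norm_le_one)

theorem IsPeak.norm_smul_le {M : Type*} [SeminormedAddCommGroup M] [Module A M] [IsBoundedSMul A M]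
    (he : IsPeak φ e) (t : M) : ‖e • t‖ ≤ ‖t‖ :=
  (_root_.norm_smul_le e t).trans (mul_le_of_le_one_left (norm_nonneg t) he.norm_le_one)

variable [CStarRing A]

theorem isPeak_one : IsPeak φ 1 where
  isSelfAdjoint := .one A
  map_eq_one := map_one φ
  norm_le_one := by
    cases subsingleton_or_nontrivial A
    · rw [Subsingleton.elim (1 : A) 0, norm_zero]
      exact zero_le_one
    · exact norm_one.le

theorem exists_isPeak_norm_mul_le [StarModule ℂ A] {f : A} (hf : φ f = 0) {ε : ℝ} (hε : 0 < ε) :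
    ∃ e, IsPeak φ e ∧ ‖e * f‖ ≤ ε := by
  set c : ℝ := (‖f‖ ^ 2 + 1)⁻¹
  have hc : 0 < c := by positivity
  obtain ⟨n, hn⟩ := exists_nat_ge (1 / (c * ε ^ 2))
  have hn : 1 ≤ n * (c * ε ^ 2) := (div_le_iff₀ (by positivity)).1 hn
  set e : A := (1 - (c : ℂ) • (star f * f)) ^ n
  have character_f {ψ : A →⋆ₐ[ℂ] ℂ} (hψ : ∀ g, ‖ψ g‖ ≤ ‖g‖) : c * ‖ψ f‖ ^ 2 ≤ 1 := by
    rw [← div_eq_inv_mul, div_le_one (by positivity)]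
    nlinarith [hψ f, norm_nonneg (ψ f)]
  have norm_character_e {ψ : A →⋆ₐ[ℂ] ℂ} (hψ : ∀ g, ‖ψ g‖ ≤ ‖g‖) :
      ‖ψ e‖ = (1 - c * ‖ψ f‖ ^ 2) ^ n := by
    have : ψ (1 - (c : ℂ) • (star f * f)) = (1 - c * ‖ψ f‖ ^ 2 : ℝ) := by
      rw [map_sub, map_one, map_smul, map_mul, map_star, smul_eq_mul, Complex.star_def,
        Complex.conj_mul']
      push_cast
      rfl
    rw [map_pow, this, norm_pow, Complex.norm_of_nonneg (sub_nonneg.2 (character_f hψ))]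
  have norm_character_e_le {ψ : A →⋆ₐ[ℂ] ℂ} (hψ : ∀ g, ‖ψ g‖ ≤ ‖g‖) : ‖ψ e‖ ≤ 1 := by
    rw [norm_character_e hψ]
    exact pow_le_one₀ (sub_nonneg.2 (character_f hψ)) (sub_le_self _ (by positivity))
  refine ⟨e, ⟨?_, ?_, norm_le_of_forall_starAlgHom zero_le_one fun ψ => norm_character_e_le⟩,
    norm_le_of_forall_starAlgHom hε.le fun ψ hψ => ?_⟩
  · refine ((IsSelfAdjoint.one A).sub (.smul ?_ (.star_mul_self f))).pow n
    exact Complex.conj_ofReal c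
  · simp only [e, map_pow, map_sub, map_one, map_smul, map_mul, hf, mul_zero, smul_zero, sub_zero,
      one_pow]
  · rw [map_mul, norm_mul, norm_character_e hψ]
    exact one_sub_pow_mul_le hc.le hε.le (norm_nonneg _) (character_f hψ) hn

end Peak

section Fiber

variable {A M N P : Type*} [NormedCommRing A] [NormedAlgebra ℂ A]
  [SeminormedAddCommGroup M] [NormedSpace ℂ M] [Module A M]

/-- The kernel of the passage from `M` to its fiber at the character `φ`: the closed subspace
generated by the products `f • t` with `φ f = 0`. -/
def fiberNull (φ : A →ₐ[ℂ] ℂ) (M : Type*) [SeminormedAddCommGroup M] [NormedSpace ℂ M]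
    [Module A M] : Submodule ℂ M :=
  (Submodule.span ℂ {s | ∃ (f : A) (t : M), φ f = 0 ∧ s = f • t}).topologicalClosure

/-- The norm in the fiber at the character `φ`, as a seminorm on `M`. -/
noncomputable def fiberSeminorm (φ : A →ₐ[ℂ] ℂ) : Seminorm ℂ M :=
  (normSeminorm ℂ (M ⧸ fiberNull φ M)).comp (fiberNull φ M).mkQ

theorem fiberSeminorm_eq_infDist (φ : A →ₐ[ℂ] ℂ) (t : M) :
    fiberSeminorm φ t = Metric.infDist t (fiberNull φ M) :=
  QuotientAddGroup.norm_mk t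

theorem fiberSeminorm_le_norm (φ : A →ₐ[ℂ] ℂ) (t : M) : fiberSeminorm φ t ≤ ‖t‖ :=
  Submodule.Quotient.norm_mk_le _ t

theorem smul_mem_fiberNull {φ : A →ₐ[ℂ] ℂ} {f : A} (hf : φ f = 0) (t : M) :
    f • t ∈ fiberNull φ M :=
  Submodule.le_topologicalClosure _ (Submodule.subset_span ⟨f, t, hf, rfl⟩)

theorem fiberSeminorm_smul [IsScalarTower ℂ A M] (φ : A →ₐ[ℂ] ℂ) (e : A) (t : M) :
    fiberSeminorm φ (e • t) = ‖φ e‖ * fiberSeminorm φ t := by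
  have hmem : e • t - φ e • t ∈ fiberNull φ M := by
    rw [← algebraMap_smul A (φ e) t, ← sub_smul]
    refine smul_mem_fiberNull ?_ t
    rw [map_sub, AlgHom.commutes, Algebra.algebraMap_self_apply, sub_self]
  rw [← map_smul_eq_mul (fiberSeminorm φ)]
  exact congrArg norm ((Submodule.Quotient.eq _).2 hmem)

variable [StarRing A] {φ : A →ₐ[ℂ] ℂ}

theorem IsPeak.fiberSeminorm_smul [IsScalarTower ℂ A M] {e : A} (he : IsPeak φ e) (t : M) :
    fiberSeminorm φ (e • t) = fiberSeminorm φ t := by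
  rw [_root_.fiberSeminorm_smul, he.map_eq_one, norm_one, one_mul]

variable [CStarRing A] [StarModule ℂ A] [IsScalarTower ℂ A M] [IsBoundedSMul A M]

theorem exists_isPeak_norm_smul_lt_of_mem_span {s : M}
    (hs : s ∈ Submodule.span ℂ {s : M | ∃ (f : A) (t : M), φ f = 0 ∧ s = f • t}) {ε : ℝ}
    (hε : 0 < ε) : ∃ e, IsPeak φ e ∧ ‖e • s‖ < ε := by
  induction hs using Submodule.span_induction generalizing ε with
  | mem s hs =>
    obtain ⟨f, t, hf, rfl⟩ := hs
    obtain ⟨e, he, hef⟩ := exists_isPeak_norm_mul_le hf (ε := ε / (‖t‖ + 1)) (by positivity)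
    refine ⟨e, he, ?_⟩
    calc ‖e • f • t‖ ≤ ‖e * f‖ * ‖t‖ := by rw [← mul_smul]; exact norm_smul_le _ _
      _ ≤ ε / (‖t‖ + 1) * ‖t‖ := by gcongr
      _ < ε / (‖t‖ + 1) * (‖t‖ + 1) := by gcongr; exact lt_add_one _
      _ = ε := div_mul_cancel₀ _ (by positivity)
  | zero => exact ⟨1, isPeak_one, by rwa [smul_zero, norm_zero]⟩
  | add s s' _ _ hs hs' =>
    obtain ⟨e, he, hes⟩ := hs (half_pos hε)
    obtain ⟨e', he', hes'⟩ := hs' (half_pos hε)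
    refine ⟨e * e', he.mul he', ?_⟩
    calc ‖(e * e') • (s + s')‖ = ‖e' • e • s + e • e' • s'‖ := by
          rw [smul_add, mul_smul, mul_smul, smul_comm e e' s]
      _ ≤ ‖e • s‖ + ‖e' • s'‖ :=
        (norm_add_le _ _).trans (add_le_add (he'.norm_smul_le _) (he.norm_smul_le _))
      _ < ε / 2 + ε / 2 := add_lt_add hes hes'
      _ = ε := add_halves ε
  | smul c s _ hs =>
    obtain ⟨e, he, hes⟩ := hs (ε := ε / (‖c‖ + 1)) (by positivity)
    refine ⟨e, he, ?_⟩
    calc ‖e • c • s‖ = ‖c‖ * ‖e • s‖ := by rw [smul_comm, norm_smul]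
      _ ≤ (‖c‖ + 1) * ‖e • s‖ := by gcongr; exact (lt_add_one _).le
      _ < (‖c‖ + 1) * (ε / (‖c‖ + 1)) := by gcongr
      _ = ε := mul_div_cancel₀ _ (by positivity)

theorem exists_isPeak_norm_smul_lt {s : M} (hs : s ∈ fiberNull φ M) {ε : ℝ} (hε : 0 < ε) :
    ∃ e, IsPeak φ e ∧ ‖e • s‖ < ε := by
  obtain ⟨s', hs', hss'⟩ := Metric.mem_closure_iff.1 hs (ε / 2) (half_pos hε)
  obtain ⟨e, he, hes'⟩ := exists_isPeak_norm_smul_lt_of_mem_span hs' (half_pos hε)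
  refine ⟨e, he, ?_⟩
  calc ‖e • s‖ = ‖e • (s - s') + e • s'‖ := by rw [← smul_add, sub_add_cancel]
    _ ≤ ‖s - s'‖ + ‖e • s'‖ := (norm_add_le _ _).trans (by gcongr; exact he.norm_smul_le _)
    _ < ε / 2 + ε / 2 := add_lt_add (dist_eq_norm s s' ▸ hss') hes'
    _ = ε := add_halves ε

theorem fiberSeminorm_lt_iff {t : M} {r : ℝ} :
    fiberSeminorm φ t < r ↔ ∃ e, IsPeak φ e ∧ ‖e • t‖ < r := by
  refine ⟨fun h => ?_, fun ⟨e, he, h⟩ => ?_⟩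
  · obtain ⟨m, hm, hmr⟩ := QuotientAddGroup.norm_lt_iff.1 h
    obtain ⟨e, he, hetm⟩ :=
      exists_isPeak_norm_smul_lt ((Submodule.Quotient.eq _).1 hm.symm) (sub_pos.2 hmr)
    refine ⟨e, he, ?_⟩
    calc ‖e • t‖ = ‖e • m + e • (t - m)‖ := by rw [← smul_add, add_sub_cancel]
      _ ≤ ‖m‖ + ‖e • (t - m)‖ := (norm_add_le _ _).trans (by gcongr; exact he.norm_smul_le m)
      _ < r := lt_sub_iff_add_lt'.1 hetm
  · rw [← he.fiberSeminorm_smul]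
    exact (fiberSeminorm_le_norm φ _).trans_lt h

theorem upperSemicontinuous_fiberSeminorm {X : Type*} [TopologicalSpace X] {φ : X → A →ₐ[ℂ] ℂ}
    (hφ : ∀ e, Continuous fun x => φ x e) (t : M) :
    UpperSemicontinuous fun x => fiberSeminorm (φ x) t := by
  intro x₀ r hr
  obtain ⟨e, he, her⟩ := fiberSeminorm_lt_iff.1 hr
  have hopen : IsOpen {x | ‖e • t‖ < ‖φ x e‖ * r} :=
    isOpen_lt continuous_const ((hφ e).norm.mul continuous_const)
  have hx₀ : ‖e • t‖ < ‖φ x₀ e‖ * r := by rwa [he.map_eq_one, norm_one, one_mul]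
  filter_upwards [hopen.mem_nhds hx₀] with x hx
  have : ‖φ x e‖ * fiberSeminorm (φ x) t < ‖φ x e‖ * r := by
    rw [← fiberSeminorm_smul]
    exact (fiberSeminorm_le_norm _ _).trans_lt hx
  exact lt_of_mul_lt_mul_left this (norm_nonneg _)

variable [SeminormedAddCommGroup N] [NormedSpace ℂ N] [Module A N] [IsScalarTower ℂ A N]

theorem fiberSeminorm_map_le {g : M → N} (hg : ∀ (e : A) t, g (e • t) = star e • g t)
    (hg' : ∀ t, ‖g t‖ ≤ ‖t‖) (t : M) : fiberSeminorm φ (g t) ≤ fiberSeminorm φ t := by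
  refine le_of_forall_gt_imp_ge_of_dense fun r hr => ?_
  obtain ⟨e, he, her⟩ := fiberSeminorm_lt_iff.1 hr
  calc fiberSeminorm φ (g t) = fiberSeminorm φ (g (e • t)) := by
        rw [hg, he.isSelfAdjoint.star_eq, he.fiberSeminorm_smul]
    _ ≤ ‖e • t‖ := (fiberSeminorm_le_norm φ _).trans (hg' _)
    _ ≤ r := her.le

variable [IsBoundedSMul A N]

theorem fiberSeminorm_map_eq_sq {q : M → N} (hq : ∀ (e : A) t, q (e • t) = (star e * e) • q t)
    (hq' : ∀ t, ‖q t‖ = ‖t‖ ^ 2) (t : M) : fiberSeminorm φ (q t) = fiberSeminorm φ t ^ 2 := by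
  have q_smul {e : A} (he : IsPeak φ e) : q (e • t) = (e * e) • q t := by
    rw [hq, he.isSelfAdjoint.star_eq]
  refine le_antisymm (le_of_forall_gt_imp_ge_of_dense fun r hr => ?_)
    (le_of_forall_gt_imp_ge_of_dense fun r hr => ?_)
  · obtain ⟨e, he, her⟩ := fiberSeminorm_lt_iff.1 (Real.lt_sqrt_of_sq_lt hr)
    calc fiberSeminorm φ (q t) = fiberSeminorm φ (q (e • t)) := by
          rw [q_smul he, (he.mul he).fiberSeminorm_smul]
      _ ≤ ‖e • t‖ ^ 2 := (fiberSeminorm_le_norm φ _).trans_eq (hq' _)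
      _ ≤ r := ((Real.lt_sqrt (norm_nonneg _)).1 her).le
  · obtain ⟨e, he, her⟩ := fiberSeminorm_lt_iff.1 hr
    calc fiberSeminorm φ t ^ 2 = fiberSeminorm φ (e • t) ^ 2 := by rw [he.fiberSeminorm_smul]
      _ ≤ ‖e • t‖ ^ 2 := pow_le_pow_left₀ (apply_nonneg _ _) (fiberSeminorm_le_norm φ _) 2
      _ = ‖e • e • q t‖ := by rw [← hq', q_smul he, mul_smul]
      _ ≤ r := (he.norm_smul_le _).trans her.le

variable [SeminormedAddCommGroup P] [NormedSpace ℂ P] [Module A P] [IsScalarTower ℂ A P]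

theorem fiberSeminorm_map₂_le {β : M → N → P}
    (hβ : ∀ (e e' : A) t u, β (e • t) (e' • u) = (e * e') • β t u)
    (hβ' : ∀ t u, ‖β t u‖ ≤ ‖t‖ * ‖u‖) (t : M) (u : N) :
    fiberSeminorm φ (β t u) ≤ fiberSeminorm φ t * fiberSeminorm φ u := by
  refine le_mul_of_forall_lt₀ fun r hr r' hr' => ?_
  obtain ⟨e, he, her⟩ := fiberSeminorm_lt_iff.1 hr
  obtain ⟨e', he', her'⟩ := fiberSeminorm_lt_iff.1 hr'
  calc fiberSeminorm φ (β t u) = fiberSeminorm φ (β (e • t) (e' • u)) := by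
        rw [hβ, (he.mul he').fiberSeminorm_smul]
    _ ≤ ‖e • t‖ * ‖e' • u‖ := (fiberSeminorm_le_norm φ _).trans (hβ' _ _)
    _ ≤ r * r' :=
      mul_le_mul her.le her'.le (norm_nonneg _) ((norm_nonneg _).trans her.le)

end Fiber

/-! ### The action of `[ι,ι]` on arrows -/

section Category

variable {O : Type*} {H : O → O → Type*} [∀ ρ σ, NormedAddCommGroup (H ρ σ)]
  [∀ ρ σ, NormedSpace ℂ (H ρ σ)] {C : CStarCategoryStruct H} {ρ σ τ ρ' σ' τ' : O}

/-- Transport of arrows along equalities of objects, as a linear isometry. Strictness of a tensor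
structure holds only up to such transports. -/
def homCast (hρ : ρ = ρ') (hσ : σ = σ') : H ρ σ ≃ₗᵢ[ℂ] H ρ' σ' :=
  hρ ▸ hσ ▸ LinearIsometryEquiv.refl ℂ (H ρ σ)

theorem homCast_heq (hρ : ρ = ρ') (hσ : σ = σ') (t : H ρ σ) : HEq (homCast hρ hσ t) t := by
  subst hρ hσ
  rfl

theorem homCast_eq_of_heq (hρ : ρ = ρ') (hσ : σ = σ') {t : H ρ σ} {t' : H ρ' σ'} (h : HEq t t') :
    homCast hρ hσ t = t' :=
  eq_of_heq ((homCast_heq hρ hσ t).trans h)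

theorem homCast_comp (hρ : ρ = ρ') (hσ : σ = σ') (hτ : τ = τ') (t : H σ τ) (u : H ρ σ) :
    homCast hρ hτ (C.comp t u) = C.comp (homCast hσ hτ t) (homCast hρ hσ u) := by
  subst hρ hσ hτ
  rfl

theorem homCast_star (hρ : ρ = ρ') (hσ : σ = σ') (t : H ρ σ) :
    homCast hσ hρ (C.star t) = C.star (homCast hρ hσ t) := by
  subst hρ hσ
  rfl

theorem CStarCategoryStruct.zero_comp (C : CStarCategoryStruct H) (u : H ρ σ) :
    C.comp (0 : H σ τ) u = 0 := by
  simpa only [zero_smul] using C.smul_comp 0 (0 : H σ τ) u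

theorem CStarCategoryStruct.comp_zero (C : CStarCategoryStruct H) (t : H σ τ) :
    C.comp t (0 : H ρ σ) = 0 := by
  simpa only [zero_smul] using C.comp_smul 0 t (0 : H ρ σ)

/-- The arrows from `ρ` to itself, with the algebra structure given by composition in `C`. -/
def EndAlgebra (_C : CStarCategoryStruct H) (ρ : O) : Type _ :=
  H ρ ρ

instance : NormedAddCommGroup (EndAlgebra C ρ) :=
  inferInstanceAs (NormedAddCommGroup (H ρ ρ))

instance : NormedSpace ℂ (EndAlgebra C ρ) :=
  inferInstanceAs (NormedSpace ℂ (H ρ ρ))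

instance : NormedRing (EndAlgebra C ρ) where
  __ := (inferInstance : NormedAddCommGroup (EndAlgebra C ρ))
  mul := C.comp
  one := C.id ρ
  left_distrib := C.comp_add
  right_distrib := C.add_comp
  zero_mul := C.zero_comp
  mul_zero := C.comp_zero
  mul_assoc := C.comp_assoc
  one_mul := C.id_comp
  mul_one := C.comp_id
  norm_mul_le := C.norm_comp_le

instance : NormedAlgebra ℂ (EndAlgebra C ρ) where
  __ := Algebra.ofModule (R := ℂ) (A := EndAlgebra C ρ) C.smul_comp fun c t u => C.comp_smul c t u
  norm_smul_le := norm_smul_le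

instance : StarRing (EndAlgebra C ρ) where
  star := C.star
  star_involutive := C.star_star
  star_mul := C.star_comp
  star_add := C.star_add

instance : CStarRing (EndAlgebra C ρ) where
  norm_mul_self_le t := ((C.cstar_identity t).trans (pow_two _)).ge

instance : StarModule ℂ (EndAlgebra C ρ) where
  star_smul := C.star_smul

end Category

namespace StrictTensorStruct

variable {C : CStarCategoryStruct Hom} (T : StrictTensorStruct C) {ρ σ τ ρ' σ' α β : Obj}
  {f g : Hom 1 1}

theorem tens_heq (hρ : ρ = ρ') (hσ : σ = σ') {t : Hom ρ σ} {t' : Hom ρ' σ'} (h : HEq t t')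
    (u : Hom α β) : HEq (T.tens t u) (T.tens t' u) := by
  subst hρ hσ
  rw [eq_of_heq h]

theorem heq_tens (hρ : ρ = ρ') (hσ : σ = σ') {t : Hom ρ σ} {t' : Hom ρ' σ'} (h : HEq t t')
    (u : Hom α β) : HEq (T.tens u t) (T.tens u t') := by
  subst hρ hσ
  rw [eq_of_heq h]

theorem lact_heq (f : Hom 1 1) (t : Hom ρ σ) : HEq (T.lact f t) (T.tens f t) :=
  cast_heq _ _

theorem ract_heq (f : Hom 1 1) (t : Hom ρ σ) : HEq (T.ract f t) (T.tens t f) :=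
  cast_heq _ _

theorem lact_eq_homCast (f : Hom 1 1) (t : Hom ρ σ) :
    T.lact f t = homCast (one_mul ρ) (one_mul σ) (T.tens f t) :=
  (homCast_eq_of_heq _ _ (T.lact_heq f t).symm).symm

theorem ract_eq_homCast (f : Hom 1 1) (t : Hom ρ σ) :
    T.ract f t = homCast (mul_one ρ) (mul_one σ) (T.tens t f) :=
  (homCast_eq_of_heq _ _ (T.ract_heq f t).symm).symm

theorem lact_add (f : Hom 1 1) (t u : Hom ρ σ) : T.lact f (t + u) = T.lact f t + T.lact f u := by
  simp only [lact_eq_homCast, T.tens_add_right, map_add]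

theorem add_lact (f g : Hom 1 1) (t : Hom ρ σ) : T.lact (f + g) t = T.lact f t + T.lact g t := by
  simp only [lact_eq_homCast, T.tens_add_left, map_add]

theorem add_ract (f g : Hom 1 1) (t : Hom ρ σ) : T.ract (f + g) t = T.ract f t + T.ract g t := by
  simp only [ract_eq_homCast, T.tens_add_right, map_add]

theorem smul_lact (c : ℂ) (f : Hom 1 1) (t : Hom ρ σ) : T.lact (c • f) t = c • T.lact f t := by
  simp only [lact_eq_homCast, T.tens_smul_left, map_smul]

theorem smul_ract (c : ℂ) (f : Hom 1 1) (t : Hom ρ σ) : T.ract (c • f) t = c • T.ract f t := by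
  simp only [ract_eq_homCast, T.tens_smul_right, map_smul]

theorem norm_lact_le (f : Hom 1 1) (t : Hom ρ σ) : ‖T.lact f t‖ ≤ ‖f‖ * ‖t‖ := by
  rw [lact_eq_homCast, LinearIsometryEquiv.norm_map]
  exact T.norm_tens_le f t

theorem id_lact (t : Hom ρ σ) : T.lact (C.id 1) t = t :=
  eq_of_heq ((T.lact_heq _ _).trans (T.one_tens t))

theorem id_ract (t : Hom ρ σ) : T.ract (C.id 1) t = t :=
  eq_of_heq ((T.ract_heq _ _).trans (T.tens_one t))

theorem lact_id (f : Hom 1 1) : T.lact f (C.id 1) = f :=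
  eq_of_heq ((T.lact_heq _ _).trans (T.tens_one f))

theorem star_lact (f : Hom 1 1) (t : Hom ρ σ) :
    C.star (T.lact f t) = T.lact (C.star f) (C.star t) := by
  simp only [lact_eq_homCast, ← homCast_star, T.tens_star]

theorem star_ract (f : Hom 1 1) (t : Hom ρ σ) :
    C.star (T.ract f t) = T.ract (C.star f) (C.star t) := by
  simp only [ract_eq_homCast, ← homCast_star, T.tens_star]

theorem comp_lact_comp (f g : Hom 1 1) (t : Hom σ τ) (u : Hom ρ σ) :
    T.lact (C.comp f g) (C.comp t u) = C.comp (T.lact f t) (T.lact g u) := by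
  simp only [lact_eq_homCast, ← homCast_comp, T.tens_comp]

theorem comp_ract_comp (f g : Hom 1 1) (t : Hom σ τ) (u : Hom ρ σ) :
    T.ract (C.comp f g) (C.comp t u) = C.comp (T.ract f t) (T.ract g u) := by
  simp only [ract_eq_homCast, ← homCast_comp, T.tens_comp]

theorem star_lact_comp_lact (f : Hom 1 1) (t : Hom ρ σ) :
    C.comp (C.star (T.lact f t)) (T.lact f t) =
      T.lact (C.comp (C.star f) f) (C.comp (C.star t) t) := by
  rw [star_lact, comp_lact_comp]

theorem lact_comp (f : Hom 1 1) (t : Hom σ τ) (u : Hom ρ σ) :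
    C.comp (T.lact f t) u = T.lact f (C.comp t u) := by
  rw [← T.id_lact u, ← comp_lact_comp, C.comp_id, id_lact]

theorem comp_lact_right (f : Hom 1 1) (t : Hom σ τ) (u : Hom ρ σ) :
    C.comp t (T.lact f u) = T.lact f (C.comp t u) := by
  rw [← T.id_lact t, ← comp_lact_comp, C.id_comp, id_lact]

theorem lact_lact (f g : Hom 1 1) (t : Hom ρ σ) :
    T.lact f (T.lact g t) = T.lact (C.comp f g) t := by
  rw [← C.id_comp (T.lact g t), ← lact_comp, ← comp_lact_comp, C.id_comp]

theorem lact_eq_comp (f g : Hom (1 : Obj) 1) : T.lact f g = C.comp f g := by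
  rw [← T.lact_id f, lact_comp, lact_id, C.id_comp]

theorem lact_eq_comp_swap (f g : Hom (1 : Obj) 1) : T.lact f g = C.comp g f := by
  conv_rhs => rw [← T.lact_id f, comp_lact_right, C.comp_id]

theorem lact_tens (f : Hom 1 1) (t : Hom ρ σ) (u : Hom α β) :
    T.tens (T.lact f t) u = T.lact f (T.tens t u) := by
  refine eq_of_heq (HEq.trans ?_ (T.lact_heq f _).symm)
  exact (T.tens_heq (one_mul ρ).symm (one_mul σ).symm (T.lact_heq f t) u).trans (T.tens_assoc f t u)

theorem mem_centralScalars_iff :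
    f ∈ T.centralScalars ↔ ∀ ρ, T.ract f (C.id ρ) = T.lact f (C.id ρ) := by
  refine forall_congr' fun ρ => ⟨fun h => eq_of_heq ?_, fun h => ?_⟩
  · exact ((T.ract_heq f _).trans h).trans (T.lact_heq f _).symm
  · exact ((T.ract_heq f _).symm.trans (heq_of_eq h)).trans (T.lact_heq f _)

variable {T}

theorem ract_eq_lact (hf : f ∈ T.centralScalars) (t : Hom ρ σ) : T.ract f t = T.lact f t := by
  calc T.ract f t = C.comp (T.ract f (C.id σ)) (T.ract (C.id 1) t) := by
        rw [← comp_ract_comp, C.comp_id, C.id_comp]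
    _ = T.lact f t := by
        rw [T.mem_centralScalars_iff.1 hf, id_ract, lact_comp, C.id_comp]

theorem tens_lact (hf : f ∈ T.centralScalars) (t : Hom ρ σ) (u : Hom α β) :
    T.tens t (T.lact f u) = T.lact f (T.tens t u) := by
  have tens_lact_heq : HEq (T.tens t (T.lact f u)) (T.tens (T.ract f t) u) :=
    (T.heq_tens (one_mul α).symm (one_mul β).symm (T.lact_heq f u) t).trans <|
      (T.tens_assoc t f u).symm.trans <|
        T.tens_heq (mul_one ρ) (mul_one σ) (T.ract_heq f t).symm u
  rw [eq_of_heq tens_lact_heq, ract_eq_lact hf, lact_tens]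

theorem comp_mem_centralScalars (hf : f ∈ T.centralScalars) (hg : g ∈ T.centralScalars) :
    C.comp f g ∈ T.centralScalars :=
  T.mem_centralScalars_iff.2 fun ρ => by
    rw [← C.id_comp (C.id ρ), comp_ract_comp, comp_lact_comp, ract_eq_lact hf, ract_eq_lact hg]

theorem add_mem_centralScalars (hf : f ∈ T.centralScalars) (hg : g ∈ T.centralScalars) :
    f + g ∈ T.centralScalars :=
  T.mem_centralScalars_iff.2 fun ρ => by
    rw [add_ract, add_lact, ract_eq_lact hf, ract_eq_lact hg]

theorem smul_id_mem_centralScalars (c : ℂ) : c • C.id 1 ∈ T.centralScalars :=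
  T.mem_centralScalars_iff.2 fun ρ => by
    rw [smul_ract, smul_lact, id_ract, id_lact]

theorem star_mem_centralScalars (hf : f ∈ T.centralScalars) : C.star f ∈ T.centralScalars :=
  T.mem_centralScalars_iff.2 fun ρ => by
    rw [← C.star_id ρ, ← star_ract, ← star_lact, ract_eq_lact hf]

variable (T)

/-- The algebra `[ι,ι]` whose spectrum is the base space, as a star subalgebra of `(ι,ι)`. -/
def centralAlgebra : StarSubalgebra ℂ (EndAlgebra C (1 : Obj)) where
  carrier := T.centralScalars
  mul_mem' := comp_mem_centralScalars
  add_mem' := add_mem_centralScalars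
  algebraMap_mem' := smul_id_mem_centralScalars
  star_mem' := star_mem_centralScalars

instance : NormedCommRing T.centralAlgebra where
  __ := (inferInstance : NormedRing T.centralAlgebra)
  -- Eckmann–Hilton: both products are `f × g`.
  mul_comm f g := Subtype.ext ((T.lact_eq_comp f.1 g.1).symm.trans (T.lact_eq_comp_swap f.1 g.1))

instance : SMul T.centralAlgebra (Hom ρ σ) :=
  ⟨fun f t => T.lact f.1 t⟩

instance : Module T.centralAlgebra (Hom ρ σ) :=
  .ofMinimalAxioms (fun f => T.lact_add f.1) (fun f g => T.add_lact f.1 g.1)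
    (fun f g t => (T.lact_lact f.1 g.1 t).symm) T.id_lact

instance : IsScalarTower ℂ T.centralAlgebra (Hom ρ σ) where
  smul_assoc c f := T.smul_lact c f.1

instance : IsBoundedSMul T.centralAlgebra (Hom ρ σ) :=
  .of_norm_smul_le fun f => T.norm_lact_le f.1

theorem lact_id_comp_lact_id (f g : Hom 1 1) (ρ : Obj) :
    C.comp (T.lact f (C.id ρ)) (T.lact g (C.id ρ)) = T.lact (C.comp f g) (C.id ρ) := by
  rw [← comp_lact_comp, C.id_comp]

theorem star_lact_id (f : Hom 1 1) (ρ : Obj) :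
    C.star (T.lact f (C.id ρ)) = T.lact (C.star f) (C.id ρ) := by
  rw [star_lact, C.star_id]

theorem smul_id_lact (c : ℂ) (t : Hom ρ σ) : T.lact (c • C.id 1) t = c • t := by
  rw [smul_lact, id_lact]

/-- The `*`-homomorphism `f ↦ f × 1_ρ`. -/
def centralHom (ρ : Obj) : T.centralAlgebra →⋆ₐ[ℂ] EndAlgebra C ρ where
  toFun f := T.lact f.1 (C.id ρ)
  map_one' := T.id_lact _
  map_mul' f g := (T.lact_id_comp_lact_id f.1 g.1 ρ).symm
  map_zero' := zero_smul T.centralAlgebra (C.id ρ)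
  map_add' f g := T.add_lact f.1 g.1 _
  commutes' c := T.smul_id_lact c _
  map_star' f := (T.star_lact_id f.1 ρ).symm

theorem centralHom_mul (f : T.centralAlgebra) (t : EndAlgebra C ρ) :
    T.centralHom ρ f * t = T.lact f.1 t :=
  (T.lact_comp f.1 (C.id ρ) t).trans (congrArg _ (C.id_comp t))

theorem mul_centralHom (f : T.centralAlgebra) (t : EndAlgebra C ρ) :
    t * T.centralHom ρ f = T.lact f.1 t :=
  (T.comp_lact_right f.1 t (C.id ρ)).trans (congrArg _ (C.comp_id t))

end StrictTensorStruct

/-! ### The field over the spectrum of `[ι,ι]` -/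

namespace IsCharacter

variable {C : CStarCategoryStruct Hom} {T : StrictTensorStruct C} {χ : Hom 1 1 → ℂ}
  {ρ σ τ ρ' σ' : Obj}

/-- The restriction of a character `χ` to `[ι,ι]`. -/
def toAlgHom (h : IsCharacter C T χ) : T.centralAlgebra →ₐ[ℂ] ℂ :=
  .ofLinearMap
    { toFun := fun f => χ f.1
      map_add' := fun f g => h.2.1 f.1 g.1
      map_smul' := fun c f => h.2.2.1 c f.1 }
    h.2.2.2.2.1 fun f g => h.2.2.2.1 f.1 f.2 g.1 g.2

theorem tensFiberNull_eq (h : IsCharacter C T χ) :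
    tensFiberNull T χ ρ σ = fiberNull h.toAlgHom (Hom ρ σ) := by
  refine congrArg (fun S => (Submodule.span ℂ S).topologicalClosure) (Set.ext fun s => ?_)
  exact ⟨fun ⟨f, hf, t, hχ⟩ => ⟨⟨f, hf⟩, t, hχ⟩, fun ⟨f, t, hχ⟩ => ⟨f.1, f.2, t, hχ⟩⟩

theorem tensFiberSeminorm_eq (h : IsCharacter C T χ) (t : Hom ρ σ) :
    tensFiberSeminorm T χ t = fiberSeminorm h.toAlgHom t := by
  rw [fiberSeminorm_eq_infDist, Metric.infDist_eq_iInf, tensFiberSeminorm, h.tensFiberNull_eq]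
  refine congrArg sInf (Set.ext fun r => ?_)
  simp only [Set.mem_ofPred_eq, Set.mem_range, Subtype.exists, dist_eq_norm, exists_prop,
    SetLike.mem_coe, eq_comm]

theorem tensFiberSeminorm_nonneg (h : IsCharacter C T χ) (t : Hom ρ σ) :
    0 ≤ tensFiberSeminorm T χ t :=
  h.tensFiberSeminorm_eq t ▸ apply_nonneg _ t

theorem tensFiberSeminorm_le_norm (h : IsCharacter C T χ) (t : Hom ρ σ) :
    tensFiberSeminorm T χ t ≤ ‖t‖ :=
  h.tensFiberSeminorm_eq t ▸ fiberSeminorm_le_norm _ t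

theorem tensFiberSeminorm_add_le (h : IsCharacter C T χ) (t t' : Hom ρ σ) :
    tensFiberSeminorm T χ (t + t') ≤ tensFiberSeminorm T χ t + tensFiberSeminorm T χ t' := by
  simp only [h.tensFiberSeminorm_eq]
  exact map_add_le_add _ t t'

theorem tensFiberSeminorm_smul (h : IsCharacter C T χ) (c : ℂ) (t : Hom ρ σ) :
    tensFiberSeminorm T χ (c • t) = ‖c‖ * tensFiberSeminorm T χ t := by
  simp only [h.tensFiberSeminorm_eq]
  exact map_smul_eq_mul _ c t

theorem tensFiberSeminorm_comp_le (h : IsCharacter C T χ) (t : Hom σ τ) (u : Hom ρ σ) :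
    tensFiberSeminorm T χ (C.comp t u) ≤ tensFiberSeminorm T χ t * tensFiberSeminorm T χ u := by
  simp only [h.tensFiberSeminorm_eq]
  exact fiberSeminorm_map₂_le (fun f g t u => (T.comp_lact_comp f.1 g.1 t u).symm)
    C.norm_comp_le t u

theorem tensFiberSeminorm_tens_le (h : IsCharacter C T χ) (t : Hom ρ σ) (u : Hom ρ' σ') :
    tensFiberSeminorm T χ (T.tens t u) ≤ tensFiberSeminorm T χ t * tensFiberSeminorm T χ u := by
  simp only [h.tensFiberSeminorm_eq]
  refine fiberSeminorm_map₂_le (fun f g t u => ?_) T.norm_tens_le t u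
  rw [mul_smul]
  exact (T.lact_tens f.1 t _).trans (congrArg _ (StrictTensorStruct.tens_lact g.2 t u))

theorem tensFiberSeminorm_star_le (h : IsCharacter C T χ) (t : Hom ρ σ) :
    tensFiberSeminorm T χ (C.star t) ≤ tensFiberSeminorm T χ t := by
  simp only [h.tensFiberSeminorm_eq]
  exact fiberSeminorm_map_le (fun f => T.star_lact f.1) (fun t => (C.norm_star t).le) t

theorem tensFiberSeminorm_star (h : IsCharacter C T χ) (t : Hom ρ σ) :
    tensFiberSeminorm T χ (C.star t) = tensFiberSeminorm T χ t := by
  refine (h.tensFiberSeminorm_star_le t).antisymm ?_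
  simpa only [C.star_star] using h.tensFiberSeminorm_star_le (C.star t)

theorem tensFiberSeminorm_star_comp_self (h : IsCharacter C T χ) (t : Hom ρ σ) :
    tensFiberSeminorm T χ (C.comp (C.star t) t) = tensFiberSeminorm T χ t ^ 2 := by
  simp only [h.tensFiberSeminorm_eq]
  exact fiberSeminorm_map_eq_sq (fun f t => T.star_lact_comp_lact f.1 t) C.cstar_identity t

end IsCharacter

section Spectrum

variable {C : CStarCategoryStruct Hom} {T : StrictTensorStruct C} {ρ σ : Obj}

theorem upperSemicontinuous_tensFiberSeminorm (t : Hom ρ σ) :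
    UpperSemicontinuous fun χ : {χ : Hom 1 1 → ℂ // IsCharacter C T χ} =>
      tensFiberSeminorm T χ.1 t := by
  have hcont (f : T.centralAlgebra) :
      Continuous fun χ : {χ : Hom 1 1 → ℂ // IsCharacter C T χ} => χ.2.toAlgHom f :=
    (continuous_apply (A := fun _ => ℂ) (show Hom 1 1 from f.1)).comp continuous_subtype_val
  have heq : (fun χ : {χ : Hom 1 1 → ℂ // IsCharacter C T χ} => tensFiberSeminorm T χ.1 t) =
      fun χ => fiberSeminorm χ.2.toAlgHom t :=
    funext fun χ => χ.2.tensFiberSeminorm_eq t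
  exact heq ▸ upperSemicontinuous_fiberSeminorm hcont t

theorem exists_isCharacter_toAlgHom_eq (φ : T.centralAlgebra →⋆ₐ[ℂ] ℂ)
    (hφ : ∀ f, ‖φ f‖ ≤ ‖f‖) :
    ∃ (χ : Hom 1 1 → ℂ) (h : IsCharacter C T χ), ∀ f, h.toAlgHom f = φ f := by
  -- `IsCharacter` asks for a functional on all of `(ι,ι)`, hence the Hahn–Banach extension.
  obtain ⟨χ, hχ, -⟩ := exists_extension_norm_eq (T.centralAlgebra.toSubalgebra.toSubmodule)
    (LinearMap.mkContinuous φ.toAlgHom.toLinearMap 1 fun f => (hφ f).trans_eq (one_mul _).symm)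
  replace hχ (f : T.centralAlgebra) : χ f.1 = φ f := hχ f
  refine ⟨χ, ⟨χ.continuous, map_add χ, map_smul χ, fun f hf g hg => ?_, ?_, fun f hf => ?_⟩, hχ⟩
  · have hmul := map_mul φ ⟨f, hf⟩ ⟨g, hg⟩
    rwa [← hχ, ← hχ, ← hχ] at hmul
  · exact (hχ 1).trans (map_one φ)
  · have hstar := map_star φ ⟨f, hf⟩
    rwa [← hχ, ← hχ] at hstar

theorem exists_isCharacter_norm_le {t : Hom ρ σ} (ht : t ≠ 0) :
    ∃ χ, IsCharacter C T χ ∧ ‖t‖ ≤ tensFiberSeminorm T χ t := by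
  let a : EndAlgebra C ρ := C.comp (C.star t) t
  have norm_a : ‖a‖ = ‖t‖ ^ 2 := C.cstar_identity t
  have norm_a_pos : 0 < ‖a‖ := norm_a ▸ pow_pos (norm_pos_iff.2 ht) 2
  have : Nontrivial (EndAlgebra C ρ) := nontrivial_of_ne a 0 (norm_pos_iff.1 norm_a_pos)
  have isSelfAdjoint_a : IsSelfAdjoint a := by
    exact (C.star_comp _ _).trans (by rw [C.star_star])
  obtain ⟨φ, hφ⟩ := exists_starAlgHom_norm_mul_le (T.centralHom ρ) isSelfAdjoint_a
    fun f => (T.centralHom_mul f a).trans (T.mul_centralHom f a).symm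
  simp only [T.centralHom_mul] at hφ
  obtain ⟨χ, h, hχ⟩ := exists_isCharacter_toAlgHom_eq φ fun f =>
    le_of_mul_le_mul_right ((hφ f).trans (T.norm_lact_le f.1 a)) norm_a_pos
  have norm_a_le : ‖a‖ ≤ tensFiberSeminorm T χ (C.comp (C.star t) t) := by
    rw [h.tensFiberSeminorm_eq]
    refine le_of_not_gt fun hlt => ?_
    obtain ⟨e, he, hea⟩ := fiberSeminorm_lt_iff.1 hlt
    have := hφ e
    rw [← hχ, he.map_eq_one, norm_one, one_mul] at this
    exact hea.not_ge this
  rw [h.tensFiberSeminorm_star_comp_self, norm_a] at norm_a_le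
  exact ⟨χ, h, le_of_sq_le_sq norm_a_le (h.tensFiberSeminorm_nonneg t)⟩

theorem norm_eq_iSup_tensFiberSeminorm (t : Hom ρ σ) :
    ‖t‖ = ⨆ χ : {χ : Hom 1 1 → ℂ // IsCharacter C T χ}, tensFiberSeminorm T χ.1 t := by
  refine le_antisymm ?_ (Real.iSup_le (fun χ => χ.2.tensFiberSeminorm_le_norm t) (norm_nonneg t))
  rcases eq_or_ne t 0 with rfl | ht
  · rw [norm_zero]
    exact Real.iSup_nonneg fun χ => χ.2.tensFiberSeminorm_nonneg 0
  · obtain ⟨χ, hχ, htχ⟩ := exists_isCharacter_norm_le (T := T) ht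
    have bddAbove : BddAbove (Set.range fun χ : {χ : Hom 1 1 → ℂ // IsCharacter C T χ} =>
        tensFiberSeminorm T χ.1 t) :=
      ⟨‖t‖, Set.forall_mem_range.2 fun χ => χ.2.tensFiberSeminorm_le_norm t⟩
    exact htχ.trans (le_ciSup bddAbove ⟨χ, hχ⟩)

end Spectrum

theorem strict_tensor_cstar_category_usc_field_over_spectrum_general
    (C : CStarCategoryStruct Hom) (T : StrictTensorStruct C) :
    (∀ (ρ σ : Obj) (t : Hom ρ σ),
      UpperSemicontinuous fun χ : {χ : Hom 1 1 → ℂ // IsCharacter C T χ} =>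
        tensFiberSeminorm T χ.1 t) ∧
    (∀ (ρ σ : Obj) (t : Hom ρ σ),
      ‖t‖ = ⨆ χ : {χ : Hom 1 1 → ℂ // IsCharacter C T χ}, tensFiberSeminorm T χ.1 t) ∧
    (∀ (χ : Hom 1 1 → ℂ), IsCharacter C T χ →
      (∀ (ρ σ : Obj) (t t' : Hom ρ σ),
        tensFiberSeminorm T χ (t + t') ≤
          tensFiberSeminorm T χ t + tensFiberSeminorm T χ t') ∧
      (∀ (ρ σ : Obj) (c : ℂ) (t : Hom ρ σ),
        tensFiberSeminorm T χ (c • t) = ‖c‖ * tensFiberSeminorm T χ t) ∧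
      (∀ (ρ σ τ : Obj) (t : Hom σ τ) (u : Hom ρ σ),
        tensFiberSeminorm T χ (C.comp t u) ≤
          tensFiberSeminorm T χ t * tensFiberSeminorm T χ u) ∧
      (∀ (ρ σ : Obj) (t : Hom ρ σ),
        tensFiberSeminorm T χ (C.star t) = tensFiberSeminorm T χ t) ∧
      (∀ (ρ σ : Obj) (t : Hom ρ σ),
        tensFiberSeminorm T χ (C.comp (C.star t) t) = tensFiberSeminorm T χ t ^ 2) ∧
      (∀ (ρ σ ρ' σ' : Obj) (t : Hom ρ σ) (u : Hom ρ' σ'),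
        tensFiberSeminorm T χ (T.tens t u) ≤
          tensFiberSeminorm T χ t * tensFiberSeminorm T χ u)) := by
  refine ⟨fun ρ σ => upperSemicontinuous_tensFiberSeminorm,
    fun ρ σ => norm_eq_iSup_tensFiberSeminorm, fun χ h => ⟨?_, ?_, ?_, ?_, ?_, ?_⟩⟩
  · exact fun ρ σ => h.tensFiberSeminorm_add_le
  · exact fun ρ σ => h.tensFiberSeminorm_smul
  · exact fun ρ σ τ => h.tensFiberSeminorm_comp_le
  · exact fun ρ σ => h.tensFiberSeminorm_star
  · exact fun ρ σ => h.tensFiberSeminorm_star_comp_self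
  · exact fun ρ σ ρ' σ' => h.tensFiberSeminorm_tens_le

/-- Every strict tensor C*-category is an upper semicontinuous field of strict tensor
C*-categories over the spectrum of `[ι,ι]`. -/
theorem strict_tensor_cstar_category_usc_field_over_spectrum
    [∀ ρ σ : Obj, CompleteSpace (Hom ρ σ)]
    (C : CStarCategoryStruct Hom) (T : StrictTensorStruct C) :
    -- upper semicontinuity of the norm functions on the spectrum
    (∀ (ρ σ : Obj) (t : Hom ρ σ),
      UpperSemicontinuous fun χ : {χ : Hom 1 1 → ℂ // IsCharacter C T χ} =>
        tensFiberSeminorm T χ.1 t) ∧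
    -- `‖t‖ = sup_x ‖x_*(t)‖`
    (∀ (ρ σ : Obj) (t : Hom ρ σ),
      ‖t‖ = ⨆ χ : {χ : Hom 1 1 → ℂ // IsCharacter C T χ}, tensFiberSeminorm T χ.1 t) ∧
    -- each `x_*` is a C*-functor into a C*-category (the quotient seminorms are
    -- subadditive, homogeneous, submultiplicative, `*`-isometric, and satisfy the
    -- C*-identity) ...
    (∀ (χ : Hom 1 1 → ℂ), IsCharacter C T χ →
      (∀ (ρ σ : Obj) (t t' : Hom ρ σ),
        tensFiberSeminorm T χ (t + t') ≤
          tensFiberSeminorm T χ t + tensFiberSeminorm T χ t') ∧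
      (∀ (ρ σ : Obj) (c : ℂ) (t : Hom ρ σ),
        tensFiberSeminorm T χ (c • t) = ‖c‖ * tensFiberSeminorm T χ t) ∧
      (∀ (ρ σ τ : Obj) (t : Hom σ τ) (u : Hom ρ σ),
        tensFiberSeminorm T χ (C.comp t u) ≤
          tensFiberSeminorm T χ t * tensFiberSeminorm T χ u) ∧
      (∀ (ρ σ : Obj) (t : Hom ρ σ),
        tensFiberSeminorm T χ (C.star t) = tensFiberSeminorm T χ t) ∧
      (∀ (ρ σ : Obj) (t : Hom ρ σ),
        tensFiberSeminorm T χ (C.comp (C.star t) t) = tensFiberSeminorm T χ t ^ 2) ∧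
      -- ... and each fiber inherits the strict tensor structure (the tensor product
      -- descends to the fibers):
      (∀ (ρ σ ρ' σ' : Obj) (t : Hom ρ σ) (u : Hom ρ' σ'),
        tensFiberSeminorm T χ (T.tens t u) ≤
          tensFiberSeminorm T χ t * tensFiberSeminorm T χ u)) :=
  strict_tensor_cstar_category_usc_field_over_spectrum_general C T
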